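/- Let p = 2, q = 2^r, and let v be an odd prime such that −1 is a power of 2 modulo v (the semiprimitive case). Take m = v and s = q−1, fix b ∈ F_q^*, and let ind b denote the index of b with respect to g (the unique integer 0 ≤ ind b ≤ q−2 with g^{ind b} = b), so h = ind b. Then P_v(0, q−1, ind b) − (q^{v−1} − 1)/(v·(q−1)) equals: 0 if ord_v 2 ∤ r; ε·√(q^{v−2})/v if ord_v 2 | r and v ∤ ind b; −ε·(v−1)·√(q^{v−2})/v if ord_v 2 | r and v | ind b, where ε = (−1)^{r/ord_v 2} and ord_v 2 is the multiplicative order of 2 modulo v. -/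

import Mathlib

noncomputable section

open Complex Polynomial Classical

/-- `P_m(a,s,h)`: the number of monic irreducible `f = x^m − a x^{m-1} + ⋯ + (−1)^m b`
of degree `m` over `F` with `b ∈ g^h·⟨g^s⟩`. -/
def PP (F : Type*) [Field F] [Fintype F] (g : F) (m s h : ℕ) (a : F) : ℕ :=
  Nat.card {f : Polynomial F // f.Monic ∧ f.natDegree = m ∧ Irreducible f ∧
    f.coeff (m - 1) = -a ∧ ∃ k : ℕ, (-1 : F) ^ m * f.coeff 0 = g ^ (h + s * k)}

/-- elements of trace zero and given norm -/
def NN (F E : Type*) [Field F] [Field E] [Fintype E] [Algebra F E] (b : F) : ℕ :=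
  (Finset.univ.filter (fun α : E => Algebra.trace F E α = 0 ∧ Algebra.norm F α = b)).card

theorem tn_of_deg (F E : Type*) [Field F] [Field E] [Algebra F E] [FiniteDimensional F E]
    [Algebra.IsSeparable F E]
    (v : ℕ) (hv : 0 < v) (hd : Module.finrank F E = v) (α : E)
    (hα : (minpoly F α).natDegree = v) :
    Algebra.trace F E α = -(minpoly F α).coeff (v - 1) ∧
    Algebra.norm F α = (-1) ^ v * (minpoly F α).coeff 0 := by
  have hint : IsIntegral F α := Algebra.IsIntegral.isIntegral α
  have htop : IntermediateField.adjoin F {α} = ⊤ := by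
    rw [Field.primitive_element_iff_minpoly_natDegree_eq, hα, hd]
  have h2 : Algebra.adjoin F {α} = ⊤ := by
    rw [← IntermediateField.adjoin_simple_toSubalgebra_of_isAlgebraic hint.isAlgebraic, htop]
    rfl
  let pb := PowerBasis.ofAdjoinEqTop hint h2
  have hg : pb.gen = α := PowerBasis.ofAdjoinEqTop_gen hint h2
  have h3 := Algebra.PowerBasis.norm_gen_eq_coeff_zero_minpoly pb
  have h4 := PowerBasis.trace_gen_eq_nextCoeff_minpoly pb
  have hdim : pb.dim = v := by rw [← pb.natDegree_minpoly, hg, hα]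
  rw [hg, hdim] at h3
  rw [hg, nextCoeff_of_natDegree_pos (by omega), hα] at h4
  exact ⟨h4, h3⟩

theorem PP_NN (F E : Type*) [Field F] [Fintype F] [Field E] [Fintype E] [Algebra F E]
    (v : ℕ) (hv : v.Prime) (hvF : (v : F) ≠ 0) (hd : Module.finrank F E = v)
    (g : Fˣ) (i : ℕ) :
    NN F E ((g : F) ^ i) = v * PP F (g : F) v (Fintype.card F - 1) i 0 := by
  have hfd : FiniteDimensional F E := Module.finite_of_finrank_pos (by rw [hd]; exact hv.pos)
  have hg1 : ∀ k, (g : F) ^ (i + (Fintype.card F - 1) * k) = (g : F) ^ i := by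
    intro k
    rw [pow_add, pow_mul, FiniteField.pow_card_sub_one_eq_one _ g.ne_zero, one_pow, mul_one]
  let Q : Polynomial F → Prop := fun f => f.Monic ∧ f.natDegree = v ∧ Irreducible f ∧
    f.coeff (v - 1) = -0 ∧ ∃ k : ℕ, (-1 : F) ^ v * f.coeff 0 = (g : F) ^ (i + (Fintype.card F - 1) * k)
  let S := Finset.univ.filter (fun α : E => Algebra.trace F E α = 0 ∧ Algebra.norm F α = (g:F)^i)
  have hdeg : ∀ α ∈ S, (minpoly F α).natDegree = v := by
    intro α hα
    have h1 := minpoly.degree_dvd (Algebra.IsIntegral.isIntegral (R := F) α)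
    rw [hd] at h1
    rcases (Nat.dvd_prime hv).1 h1 with h | h
    · rw [minpoly.natDegree_eq_one_iff] at h
      obtain ⟨c, rfl⟩ := h
      simp only [S, Finset.mem_filter, Finset.mem_univ, true_and] at hα
      rw [Algebra.trace_algebraMap, Algebra.norm_algebraMap, hd] at hα
      obtain ⟨h1, h2⟩ := hα
      rw [nsmul_eq_mul] at h1
      rcases mul_eq_zero.1 h1 with h | h
      · exact absurd h hvF
      · rw [h, zero_pow hv.ne_zero] at h2
        exact absurd h2.symm (pow_ne_zero _ g.ne_zero)
    · exact h
  have hS : ∀ α : E, α ∈ S ↔ Q (minpoly F α) := by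
    intro α
    constructor
    · intro h
      have h1 := hdeg α h
      obtain ⟨ht, hn⟩ := tn_of_deg F E v hv.pos hd α h1
      simp only [S, Finset.mem_filter, Finset.mem_univ, true_and] at h
      refine ⟨minpoly.monic (Algebra.IsIntegral.isIntegral α), h1,
        minpoly.irreducible (Algebra.IsIntegral.isIntegral α), ?_, 0, ?_⟩
      · rw [ht] at h; rw [← h.1, neg_neg]
      · rw [hg1, ← hn, h.2]
    · rintro ⟨-, h1, -, h2, k, hk⟩
      obtain ⟨ht, hn⟩ := tn_of_deg F E v hv.pos hd α h1
      simp only [S, Finset.mem_filter, Finset.mem_univ, true_and]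
      rw [ht, hn, hk, hg1, h2]; simp
  have hroots : ∀ f : F[X], Q f → (f.rootSet E).ncard = v := by
    intro f hf
    rw [← hf.2.1, ← Nat.card_coe_set_eq, Nat.card_eq_fintype_card]
    apply Polynomial.card_rootSet_eq_natDegree
    · exact PerfectField.separable_of_irreducible hf.2.2.1
    · have h1 := (hf.2.2.1.natDegree_dvd_iff_dvd_X_pow_card_pow_sub_X (n := v)).1 (by rw [hf.2.1])
      have h2 := FiniteField.isSplittingField_sub E F
      refine Splits.of_dvd h2.splits ?_ (Polynomial.map_dvd (algebraMap F E) ?_)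
      · exact Polynomial.map_ne_zero (FiniteField.X_pow_card_sub_X_ne_zero _ Fintype.one_lt_card)
      · rwa [Module.card_eq_pow_finrank (K := F) (V := E), hd, ← Nat.card_eq_fintype_card]
  have hmin : ∀ f : F[X], Q f → ∀ α : E, minpoly F α = f ↔ α ∈ f.rootSet E := by
    intro f hf α
    rw [mem_rootSet_of_ne hf.1.ne_zero]
    constructor
    · rintro rfl; exact minpoly.aeval _ _
    · intro h; exact (minpoly.eq_of_irreducible_of_monic hf.2.2.1 h hf.1).symm
  let e : S ≃ Σ f : {f : F[X] // Q f}, (f.1.rootSet E) :=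
    { toFun := fun α => ⟨⟨minpoly F α.1, (hS _).1 α.2⟩, ⟨α.1, (hmin _ ((hS _).1 α.2) _).1 rfl⟩⟩
      invFun := fun x => ⟨x.2.1, (hS _).2 (by
        rw [(hmin _ x.1.2 x.2.1).2 x.2.2]; exact x.1.2)⟩
      left_inv := fun α => rfl
      right_inv := by
        rintro ⟨⟨f, hf⟩, ⟨α, hα⟩⟩
        have := (hmin _ hf α).2 hα
        subst this
        rfl }
  have hfin : Finite {f : F[X] // Q f} := by
    have : Function.Surjective (fun α : S => (⟨minpoly F α.1, (hS _).1 α.2⟩ : {f : F[X] // Q f})) := by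
      rintro ⟨f, hf⟩
      have h1 := hroots f hf
      have : (f.rootSet E).Nonempty := by
        rw [← Set.ncard_pos, h1]; exact hv.pos
      obtain ⟨α, hα⟩ := this
      have h2 := (hmin _ hf α).2 hα
      exact ⟨⟨α, (hS _).2 (h2 ▸ hf)⟩, Subtype.ext h2⟩
    exact Finite.of_surjective _ this
  have : Fintype {f : F[X] // Q f} := Fintype.ofFinite _
  have hc := Nat.card_congr e
  rw [Nat.card_sigma] at hc
  have : ∀ f : {f : F[X] // Q f}, Nat.card (f.1.rootSet E) = v := by
    intro f; rw [Nat.card_coe_set_eq]; exact hroots _ f.2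
  simp only [this, Finset.sum_const, Finset.card_univ, smul_eq_mul] at hc
  rw [Nat.card_eq_fintype_card, Fintype.card_coe] at hc
  show S.card = _
  rw [hc, ← Nat.card_eq_fintype_card, mul_comm]
  rfl

theorem NN_scale (F E : Type*) [Field F] [Field E] [Fintype E] [Algebra F E]
    (v : ℕ) (hd : Module.finrank F E = v) (b c : F) (hc : c ≠ 0) :
    NN F E (b * c ^ v) = NN F E b := by
  symm
  unfold NN
  have hc' : algebraMap F E c ≠ 0 := by simpa using hc
  refine Finset.card_bij' (fun α _ => algebraMap F E c * α)
    (fun α _ => (algebraMap F E c)⁻¹ * α) ?_ ?_ ?_ ?_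
  · intro α h
    simp only [Finset.mem_filter, Finset.mem_univ, true_and] at h ⊢
    rw [MonoidHom.map_mul, ← Algebra.smul_def, LinearMap.map_smul, h.1, Algebra.norm_algebraMap,
      h.2, hd, mul_comm]
    simp
  · intro α h
    simp only [Finset.mem_filter, Finset.mem_univ, true_and] at h ⊢
    rw [← map_inv₀, MonoidHom.map_mul, ← Algebra.smul_def, LinearMap.map_smul, h.1,
      Algebra.norm_algebraMap, h.2, hd]
    refine ⟨by simp, ?_⟩
    rw [mul_comm, mul_assoc, ← mul_pow, mul_inv_cancel₀ hc, one_pow, mul_one]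
  · intro α h; field_simp
  · intro α h; field_simp

theorem sum_units_range (F : Type*) [Field F] [Fintype F] (g : Fˣ)
    (hg : ∀ u : Fˣ, u ∈ Subgroup.zpowers g) (f : Fˣ → ℂ) :
    ∑ u : Fˣ, f u = ∑ i ∈ Finset.range (Fintype.card F - 1), f (g ^ i) := by
  have ho : orderOf g = Fintype.card F - 1 := by
    rw [orderOf_eq_card_of_forall_mem_zpowers hg, Nat.card_eq_fintype_card, Fintype.card_units]
  have : (Finset.univ : Finset Fˣ) = (Finset.range (Fintype.card F - 1)).image (g ^ ·) := by
    rw [← ho]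
    have := IsCyclic.image_range_orderOf hg
    exact this.symm
  rw [this, Finset.sum_image]
  intro a ha b hb h
  apply pow_injOn_Iio_orderOf (x := g) _ _ h
  · simpa [ho] using ha
  · simpa [ho] using hb

theorem sum_NN (F E : Type*) [Field F] [Fintype F] [Field E] [Fintype E] [Algebra F E]
    (f : F → ℂ) :
    ∑ α : E, (if Algebra.trace F E α = 0 ∧ α ≠ 0 then f (Algebra.norm F α) else 0) =
      ∑ u : Fˣ, (NN F E (u : F) : ℂ) * f u := by
  have hfd : FiniteDimensional F E := inferInstance
  unfold NN
  simp only [Finset.card_filter, Nat.cast_sum, Finset.sum_mul]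
  rw [Finset.sum_comm]
  refine Finset.sum_congr rfl fun α _ => ?_
  by_cases h0 : α = 0
  · subst h0
    have h1 : ∀ u : Fˣ, (0 : F) ≠ u := fun u => u.ne_zero.symm
    simp [h1]
  · have hn : Algebra.norm F α ≠ 0 := by rwa [Ne, Algebra.norm_eq_zero_iff]
    rw [Finset.sum_eq_single (Units.mk0 _ hn)]
    · by_cases ht : Algebra.trace F E α = 0 <;> simp [ht, h0]
    · intro u _ hu
      have : Algebra.norm F α ≠ (u : F) := by
        intro h; apply hu; ext; simp [h]
      simp [this]
    · simp

theorem card_ker (F E : Type*) [Field F] [Fintype F] [Field E] [Fintype E] [Algebra F E]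
    (v : ℕ) (hd : Module.finrank F E = v) :
    (Finset.univ.filter (fun α : E => Algebra.trace F E α = 0)).card = Fintype.card F ^ (v - 1) := by
  have h := LinearMap.finrank_range_add_finrank_ker (Algebra.trace F E)
  rw [LinearMap.range_eq_top.2 (Algebra.trace_surjective F E), finrank_top, Module.finrank_self, hd] at h
  have h2 := Module.natCard_eq_pow_finrank (K := F) (V := LinearMap.ker (Algebra.trace F E))
  rw [show v - 1 = Module.finrank F (LinearMap.ker (Algebra.trace F E)) by omega,
    ← Nat.card_eq_fintype_card, ← h2, Nat.card_eq_fintype_card]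
  rw [Fintype.card_subtype]
  rfl

theorem total_NN (F E : Type*) [Field F] [Fintype F] [Field E] [Fintype E] [Algebra F E]
    (v : ℕ) (hd : Module.finrank F E = v) :
    ∑ u : Fˣ, (NN F E (u : F) : ℂ) = (Fintype.card F : ℂ) ^ (v - 1) - 1 := by
  have h := sum_NN F E (fun _ => 1)
  simp only [mul_one] at h
  rw [← h, ← Nat.cast_pow, ← card_ker F E v hd, Finset.sum_ite, Finset.sum_const, Finset.sum_const_zero]
  have : (Finset.univ.filter (fun α : E => Algebra.trace F E α = 0 ∧ α ≠ 0)) =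
    (Finset.univ.filter (fun α : E => Algebra.trace F E α = 0)).erase 0 := by
    ext; simp [and_comm]
  rw [this, ← Finset.card_erase_add_one (s := Finset.univ.filter (fun α : E => Algebra.trace F E α = 0)) (a := 0) (by simp)]
  simp

theorem sum_periodic (f : ℕ → ℂ) (v w : ℕ) (hf : ∀ i, f (i + v) = f i) :
    ∑ i ∈ Finset.range (v * w), f i = w * ∑ i ∈ Finset.range v, f i := by
  have h : ∀ w i, f (v * w + i) = f i := by
    intro w
    induction w with
    | zero => simp
    | succ k ih => intro i; rw [show v * (k + 1) + i = v * k + i + v by ring, hf, ih]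
  induction w with
  | zero => simp
  | succ k ih =>
    rw [Nat.mul_succ, Finset.sum_range_add, ih]
    simp only [h]
    push_cast; ring

theorem lin_indep (v : ℕ) (hv : v.Prime) (ζ : ℂ) (hζ : IsPrimitiveRoot ζ v) (x : ℕ → ℤ)
    (h : ∑ i ∈ Finset.range v, (x i : ℂ) * ζ ^ i = 0) : ∀ i < v, x i = x (v - 1) := by
  let P : ℚ[X] := ∑ i ∈ Finset.range v, C ((x i - x (v - 1) : ℤ) : ℚ) * X ^ i
  have hs : ∑ i ∈ Finset.range v, ζ ^ i = 0 := hζ.geom_sum_eq_zero hv.one_lt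
  have hP : aeval ζ P = 0 := by
    simp only [P, map_sum, map_mul, aeval_C, map_pow, aeval_X]
    simp only [eq_ratCast, Int.cast_sub, Rat.cast_sub, Rat.cast_intCast, sub_mul, Finset.sum_sub_distrib]
    rw [h, ← Finset.mul_sum, hs]; simp
  have hcoef : ∀ i < v, P.coeff i = ((x i - x (v - 1) : ℤ) : ℚ) := by
    intro i hi
    simp only [P, finsetSum_coeff, coeff_C_mul_X_pow]
    simp [hi]
  have hm : minpoly ℚ ζ = cyclotomic v ℚ := (cyclotomic_eq_minpoly_rat hζ hv.pos).symm
  have hdv : cyclotomic v ℚ ∣ P := by rw [← hm]; exact minpoly.dvd ℚ ζ hP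
  have h0 : P = 0 := by
    apply Polynomial.eq_zero_of_dvd_of_degree_lt hdv
    rw [degree_cyclotomic, Nat.totient_prime hv, degree_lt_iff_coeff_zero]
    intro m hm
    by_cases hmv : m < v
    · rw [hcoef m hmv, show m = v - 1 by omega]; simp
    · simp only [P, finsetSum_coeff, coeff_C_mul_X_pow]
      apply Finset.sum_eq_zero
      intro j hj
      have := Finset.mem_range.1 hj
      rw [if_neg (by omega)]
  intro i hi
  have := hcoef i hi
  rw [h0, coeff_zero] at this
  have : x i - x (v - 1) = 0 := by exact_mod_cast this.symm
  omega

theorem gauss_part (F E : Type*) [Field F] [Fintype F] [Field E] [Fintype E] [Algebra F E]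
    [Algebra (ZMod 2) F] [Algebra (ZMod 2) E] [IsScalarTower (ZMod 2) F E]
    (v : ℕ) (hd : Module.finrank F E = v) (χ : MulChar F ℂ) (hχ1 : χ ≠ 1) (hχv : χ ^ v = 1)
    (k : ℕ) (hk : (2 : ZMod v) ^ k = -1) :
    ∃ G : ℂ, G ^ 2 = (Fintype.card E : ℂ) ∧ (Fintype.card F : ℂ) *
      ∑ α : E, (if Algebra.trace F E α = 0 ∧ α ≠ 0 then χ (Algebra.norm F α) else 0) =
      ((Fintype.card F : ℂ) - 1) * G := by
  have : Fact (Nat.Prime 2) := ⟨Nat.prime_two⟩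
  have hcE : CharP E 2 := charP_of_injective_algebraMap (algebraMap (ZMod 2) E).injective 2
  have hfd : FiniteDimensional F E := inferInstance
  let ψ0 : AddChar (ZMod 2) ℂ := ZMod.stdAddChar
  have hψ0 : ψ0.IsPrimitive := ZMod.isPrimitive_stdAddChar 2
  let ψF : AddChar F ℂ := ψ0.compAddMonoidHom (Algebra.trace (ZMod 2) F).toAddMonoidHom
  let ψE : AddChar E ℂ := ψ0.compAddMonoidHom (Algebra.trace (ZMod 2) E).toAddMonoidHom
  have hEF : ∀ x, ψE x = ψF (Algebra.trace F E x) := by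
    intro x
    show ψ0 (Algebra.trace (ZMod 2) E x) = ψ0 (Algebra.trace (ZMod 2) F (Algebra.trace F E x))
    rw [Algebra.trace_trace]
  have hψ01 : ψ0 1 ≠ 1 := by
    rw [Ne, hψ0.zmod_char_eq_one_iff]; exact one_ne_zero
  have hpF : ψF.IsPrimitive := by
    apply AddChar.IsPrimitive.of_ne_one
    obtain ⟨a, ha⟩ := Algebra.trace_surjective (ZMod 2) F 1
    rw [AddChar.ne_one_iff]
    refine ⟨a, ?_⟩
    show ψ0 (Algebra.trace (ZMod 2) F a) ≠ 1
    rwa [ha]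
  have hpE : ψE.IsPrimitive := by
    apply AddChar.IsPrimitive.of_ne_one
    obtain ⟨a, ha⟩ := Algebra.trace_surjective (ZMod 2) E 1
    rw [AddChar.ne_one_iff]
    refine ⟨a, ?_⟩
    show ψ0 (Algebra.trace (ZMod 2) E a) ≠ 1
    rwa [ha]
  have hsq : ∀ x, ψE (x ^ 2) = ψE x := by
    intro x
    show ψ0 (Algebra.trace (ZMod 2) E (x ^ 2)) = ψ0 (Algebra.trace (ZMod 2) E x)
    congr 1
    have h := Algebra.trace_eq_of_algEquiv (FiniteField.frobeniusAlgEquivOfAlgebraic (ZMod 2) E) x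
    rw [← h]
    simp
  have hinv : ψE⁻¹ = ψE := by
    ext x
    rw [AddChar.inv_apply, CharTwo.neg_eq]
  let χE : MulChar E ℂ :=
    { toMonoidHom := χ.toMonoidHom.comp (Algebra.norm F)
      map_nonunit' := by
        intro a ha
        have : a = 0 := by simpa [isUnit_iff_ne_zero] using ha
        subst this
        show χ (Algebra.norm F (0 : E)) = 0
        rw [Algebra.norm_zero, MulChar.map_zero] }
  have hχE : ∀ x, χE x = χ (Algebra.norm F x) := fun _ => rfl
  have hχE1 : χE ≠ 1 := by
    intro h
    apply hχ1
    ext u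
    obtain ⟨x, hx⟩ := FiniteField.norm_surjective F E (u : F)
    have hx0 : x ≠ 0 := by
      rintro rfl; rw [Algebra.norm_zero] at hx; exact u.ne_zero hx.symm
    rw [← hx, ← hχE, h, hx]
    rw [MulChar.one_apply (isUnit_iff_ne_zero.2 hx0), MulChar.one_apply u.isUnit]
  have hχEv : χE ^ v = 1 := by
    ext u
    rw [MulChar.pow_apply_coe, hχE, MulChar.one_apply u.isUnit]
    have hn : IsUnit (Algebra.norm F (u : E)) := u.isUnit.map _
    obtain ⟨w, hw⟩ := hn
    rw [← hw, ← MulChar.pow_apply_coe, hχv, MulChar.one_apply w.isUnit]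
  have hfrob : ∀ φ : MulChar E ℂ, gaussSum (φ ^ 2) ψE = gaussSum φ ψE := by
    intro φ
    unfold gaussSum
    refine Fintype.sum_bijective (fun x : E => x ^ 2) (bijective_frobenius E 2) _ _ ?_
    intro x
    rw [hsq, MulChar.pow_apply' _ two_ne_zero, map_pow]
  have hfrobk : ∀ j, gaussSum (χE ^ (2 ^ j)) ψE = gaussSum χE ψE := by
    intro j
    induction j with
    | zero => simp
    | succ j ih => rw [pow_succ, pow_mul, hfrob, ih]
  have hkinv : χE ^ (2 ^ k) = χE⁻¹ := by
    rw [eq_inv_iff_mul_eq_one, ← pow_succ]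
    have : v ∣ 2 ^ k + 1 := by
      rw [← ZMod.natCast_eq_zero_iff]; push_cast; rw [hk]; ring
    obtain ⟨c, hc⟩ := this
    rw [hc, pow_mul, hχEv, one_pow]
  refine ⟨gaussSum χE ψE, ?_, ?_⟩
  · have h := gaussSum_mul_gaussSum_eq_card hχE1 hpE
    rw [hinv, ← hkinv, hfrobk] at h
    rw [sq, h]
  · have hzero : ∀ α : E, (Fintype.card F : ℂ) *
        (if Algebra.trace F E α = 0 ∧ α ≠ 0 then χ (Algebra.norm F α) else 0) =
        ∑ y : F, χE α * ψF (y * Algebra.trace F E α) := by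
      intro α
      rw [← Finset.mul_sum, AddChar.sum_mulShift _ hpF]
      by_cases h0 : α = 0
      · subst h0; simp [MulChar.map_zero χE]
      · by_cases ht : Algebra.trace F E α = 0 <;> simp [ht, h0, hχE, mul_comm]
    rw [Finset.mul_sum, Finset.sum_congr rfl (fun α _ => hzero α), Finset.sum_comm]
    have hy : ∀ y : F, y ≠ 0 → ∑ α : E, χE α * ψF (y * Algebra.trace F E α) = gaussSum χE ψE := by
      intro y hy
      let u : Eˣ := Units.map (algebraMap F E).toMonoidHom (Units.mk0 y hy)
      have hu : (u : E) = algebraMap F E y := rfl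
      rw [← gaussSum_mulShift χE ψE u]
      have h1 : χE u = 1 := by
        rw [hu, hχE, Algebra.norm_algebraMap, hd, map_pow]
        have := MulChar.pow_apply_coe χ v (Units.mk0 y hy)
        rw [hχv, MulChar.one_apply (Units.isUnit _)] at this
        exact this.symm
      rw [h1, one_mul]
      unfold gaussSum
      refine Finset.sum_congr rfl fun α _ => ?_
      rw [AddChar.mulShift_apply, hEF, hu, ← Algebra.smul_def, map_smul, smul_eq_mul]
    rw [← Finset.add_sum_erase _ _ (Finset.mem_univ (0 : F)),
      Finset.sum_congr rfl (fun y h => hy y (Finset.ne_of_mem_erase h)), Finset.sum_const,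
      Finset.card_erase_of_mem (Finset.mem_univ _), Finset.card_univ, nsmul_eq_mul,
      Nat.cast_sub Fintype.card_pos]
    have : ∑ α : E, χE α * ψF (0 * Algebra.trace F E α) = 0 := by
      simp [MulChar.sum_eq_zero_of_ne_one hχE1]
    rw [this]; simp

theorem NN_coprime (F E : Type*) [Field F] [Fintype F] [Field E] [Fintype E] [Algebra F E]
    (v : ℕ) (hv : v.Prime) (hd : Module.finrank F E = v) (hc : ¬ v ∣ Fintype.card F - 1)
    (u : Fˣ) :
    (NN F E (u : F) : ℂ) * ((Fintype.card F : ℂ) - 1) = (Fintype.card F : ℂ) ^ (v - 1) - 1 := by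
  rw [← total_NN F E v hd]
  have hcard : Nat.card Fˣ = Fintype.card F - 1 := by
    rw [Nat.card_eq_fintype_card, Fintype.card_units]
  have hcop : (Nat.card Fˣ).Coprime v := by
    rw [hcard]; exact ((Nat.Prime.coprime_iff_not_dvd hv).2 hc).symm
  have h1 : ∀ w : Fˣ, NN F E (w : F) = NN F E (u : F) := by
    intro w
    obtain ⟨c, hc⟩ := (powCoprime hcop).surjective (u⁻¹ * w)
    have hc' : c ^ v = u⁻¹ * w := hc
    have : (w : F) = (u : F) * (c : F) ^ v := by
      rw [← Units.val_pow_eq_pow_val, hc', ← Units.val_mul, mul_inv_cancel_left]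
    rw [this, NN_scale F E v hd _ _ c.ne_zero]
  simp only [h1, Finset.sum_const, Finset.card_univ, nsmul_eq_mul]
  rw [Fintype.card_units, Nat.cast_sub Fintype.card_pos]
  push_cast; ring

theorem NN_semi (F E : Type*) [Field F] [Fintype F] [Field E] [Fintype E] [Algebra F E]
    [Algebra (ZMod 2) F] [Algebra (ZMod 2) E] [IsScalarTower (ZMod 2) F E]
    (v : ℕ) (hv : v.Prime) (hvodd : Odd v) (hd : Module.finrank F E = v)
    (t γ : ℕ) (ht : (2 : ZMod v) ^ t = -1) (hF : Fintype.card F = 2 ^ (2 * t * γ))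
    (g : Fˣ) (hg : ∀ u : Fˣ, u ∈ Subgroup.zpowers g)
    (hdvd : ∀ i, v ∣ NN F E ((g : F) ^ i)) (i : ℕ) :
    (NN F E ((g : F) ^ i) : ℤ) = ∑ j ∈ Finset.range (v - 1), (Fintype.card F : ℤ) ^ j
      + (-1) ^ γ * 2 ^ (t * γ * (v - 2))
      - (if v ∣ i then (v : ℤ) * ((-1) ^ γ * 2 ^ (t * γ * (v - 2))) else 0) := by
  have : Fact v.Prime := ⟨hv⟩
  have hv3 : 3 ≤ v := by
    rcases hvodd with ⟨a, ha⟩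
    have := hv.two_le
    omega
  have hqv : ((Fintype.card F : ℕ) : ZMod v) = 1 := by
    rw [hF]; push_cast
    rw [show 2 * t * γ = t * (2 * γ) by ring, pow_mul, ht, pow_mul]; simp
  have hq1 : v ∣ Fintype.card F - 1 := by
    rw [← ZMod.natCast_eq_zero_iff, Nat.cast_sub Fintype.card_pos, hqv]; simp
  have hζ0 := Complex.isPrimitiveRoot_exp v hv.ne_zero
  obtain ⟨χ, hχ⟩ := MulChar.exists_mulChar_orderOf F hq1 hζ0
  have hχ1 : χ ≠ 1 := by
    rintro rfl; rw [orderOf_one] at hχ; omega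
  have hχv : χ ^ v = 1 := by rw [← hχ]; exact pow_orderOf_eq_one χ
  obtain ⟨G, hG2, hG⟩ := gauss_part F E v hd χ hχ1 hχv t ht
  obtain ⟨w, hw⟩ := hq1
  have hqpos : 1 < Fintype.card F := Fintype.one_lt_card
  have hw0 : (w : ℂ) ≠ 0 := by
    have : w ≠ 0 := by rintro rfl; omega
    exact_mod_cast this
  have hv0 : (v : ℂ) ≠ 0 := by exact_mod_cast hv.ne_zero
  have hqC : (Fintype.card F : ℂ) - 1 = v * w := by
    have : Fintype.card F = v * w + 1 := by omega
    rw [this]; push_cast; ring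
  have hq0 : (Fintype.card F : ℂ) ≠ 0 := by exact_mod_cast Fintype.card_ne_zero
  -- the root of unity
  let ζ : ℂ := χ (g : F)
  have hζ1 : ζ ^ v = 1 := by
    have := MulChar.pow_apply_coe χ v g
    rw [hχv, MulChar.one_apply g.isUnit] at this
    exact this.symm
  have hζ : IsPrimitiveRoot ζ v := by
    rw [IsPrimitiveRoot.iff_orderOf]
    apply orderOf_eq_prime hζ1
    intro h
    apply hχ1
    rw [MulChar.eq_iff hg]
    rw [MulChar.one_apply g.isUnit]; exact h
  have hper : ∀ i, NN F E ((g : F) ^ (i + v)) = NN F E ((g : F) ^ i) := by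
    intro i
    rw [pow_add, NN_scale F E v hd _ _ g.ne_zero]
  have hperm : ∀ m i, NN F E ((g : F) ^ (i + v * m)) = NN F E ((g : F) ^ i) := by
    intro m
    induction m with
    | zero => simp
    | succ m ih => intro i; rw [Nat.mul_succ, ← add_assoc, hper, ih]
  let L : ℤ := 2 ^ (t * γ * (v - 2))
  let M : ℤ := 2 ^ (t * γ * v)
  have hML : (Fintype.card F : ℤ) * L = M := by
    simp only [M, L, hF]
    push_cast
    rw [← pow_add]; congr 1
    obtain ⟨a, rfl⟩ := Nat.exists_eq_add_of_le hv3
    rw [show 3 + a - 2 = 1 + a by omega]; ring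
  have hGM : G ^ 2 = (M : ℂ) ^ 2 := by
    rw [hG2, Module.card_eq_pow_finrank (K := F) (V := E), hd, hF]
    simp only [M]; push_cast
    rw [← pow_mul, ← pow_mul]; congr 1; ring
  obtain ⟨σ, hσ, hGσ⟩ : ∃ σ : ℤ, (σ = 1 ∨ σ = -1) ∧ G = σ * M := by
    rcases sq_eq_sq_iff_eq_or_eq_neg.1 hGM with h | h
    · exact ⟨1, Or.inl rfl, by simp [h]⟩
    · exact ⟨-1, Or.inr rfl, by simp [h]⟩
  have hsumχ : ∑ i ∈ Finset.range v, (NN F E ((g : F) ^ i) : ℂ) * ζ ^ i = v * (σ * L) := by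
    rw [sum_NN F E (fun x => χ x),
      sum_units_range F g hg (fun u => (NN F E (u : F) : ℂ) * χ u), hw] at hG
    have h1 : ∀ i, (NN F E ((g ^ i : Fˣ) : F) : ℂ) * χ ((g ^ i : Fˣ) : F) =
        (NN F E ((g : F) ^ i) : ℂ) * ζ ^ i := by
      intro i; rw [Units.val_pow_eq_pow_val, map_pow]
    simp only [h1] at hG
    rw [sum_periodic _ v w (by intro i; rw [hper, pow_add, hζ1, mul_one]), hGσ, hqC, ← hML] at hG
    push_cast at hG
    apply mul_left_cancel₀ hw0
    apply mul_left_cancel₀ hq0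
    rw [hG]; ring
  have hsum1 : ∑ i ∈ Finset.range v, (NN F E ((g : F) ^ i) : ℤ) =
      v * ∑ j ∈ Finset.range (v - 1), (Fintype.card F : ℤ) ^ j := by
    have h := total_NN F E v hd
    rw [sum_units_range F g hg (fun u => (NN F E (u : F) : ℂ)), hw] at h
    simp only [Units.val_pow_eq_pow_val] at h
    rw [sum_periodic _ v w (by intro i; rw [hper]), ← geom_sum_mul, hqC] at h
    have h2 : ∑ i ∈ Finset.range v, (NN F E ((g : F) ^ i) : ℂ) =
      v * ∑ j ∈ Finset.range (v - 1), (Fintype.card F : ℂ) ^ j := by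
      apply mul_left_cancel₀ hw0
      rw [h]; ring
    exact_mod_cast h2
  -- linear independence
  have hlin := lin_indep v hv ζ hζ (fun i => (NN F E ((g : F) ^ i) : ℤ) - if i = 0 then v * (σ * L) else 0) (by
    push_cast
    simp only [sub_mul, Finset.sum_sub_distrib]
    rw [hsumχ, Finset.sum_eq_single 0]
    · simp
    · intro b _ hb; simp [hb]
    · intro h; simp [hv.pos] at h)
  have hv1 : v - 1 ≠ 0 := by omega
  simp only [hv1, if_false, sub_zero] at hlin
  set A : ℤ := (NN F E ((g : F) ^ (v - 1)) : ℤ) with hA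
  set B : ℤ := ∑ j ∈ Finset.range (v - 1), (Fintype.card F : ℤ) ^ j with hB
  have hx : ∀ i < v, (NN F E ((g : F) ^ i) : ℤ) = A + if i = 0 then v * (σ * L) else 0 := by
    intro i hi
    have := hlin i hi
    linarith
  have hAB : A = B - σ * L := by
    rw [Finset.sum_congr rfl (fun i hi => hx i (Finset.mem_range.1 hi)), Finset.sum_add_distrib,
      Finset.sum_ite_eq' (Finset.range v) 0 (fun _ => (v : ℤ) * (σ * L))] at hsum1
    simp only [Finset.sum_const, Finset.card_range, Finset.mem_range, hv.pos, if_true, nsmul_eq_mul] at hsum1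
    have hvz : (v : ℤ) ≠ 0 := by exact_mod_cast hv.ne_zero
    apply mul_left_cancel₀ hvz
    linarith
  have hσ' : σ = -(-1) ^ γ := by
    have h1 : ((A : ℤ) : ZMod v) = 0 := by
      rw [hA, Int.cast_natCast, ZMod.natCast_eq_zero_iff]; exact hdvd _
    have hLv : ((L : ℤ) : ZMod v) = (-1) ^ γ := by
      simp only [L]; push_cast
      rw [mul_assoc, pow_mul, ht, pow_mul]
      have : Odd (v - 2) := by
        rcases hvodd with ⟨a, ha⟩; exact ⟨a - 1, by omega⟩
      rcases neg_one_pow_eq_or (ZMod v) γ with h | h <;> rw [h]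
      · simp
      · exact this.neg_one_pow
    have hBv : ((B : ℤ) : ZMod v) = -1 := by
      rw [hB]; push_cast
      rw [hqv]; simp [Nat.cast_sub hv.one_lt.le]
    rw [hAB] at h1
    push_cast at h1
    rw [hLv, hBv] at h1
    have h2 : (2 : ZMod v) ≠ 0 := by
      intro h
      have : ((2 : ℕ) : ZMod v) = 0 := by exact_mod_cast h
      rw [ZMod.natCast_eq_zero_iff] at this
      have := Nat.le_of_dvd (by norm_num) this
      omega
    rcases hσ with rfl | rfl <;> rcases Nat.even_or_odd γ with h | h
    · rw [h.neg_one_pow] at h1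
      exfalso; apply h2; push_cast at h1; linear_combination -h1
    · rw [h.neg_one_pow]; norm_num
    · rw [h.neg_one_pow]
    · rw [h.neg_one_pow] at h1
      exfalso; apply h2; push_cast at h1; linear_combination -h1
  have hi : (NN F E ((g : F) ^ i) : ℤ) = NN F E ((g : F) ^ (i % v)) := by
    conv_lhs => rw [← Nat.mod_add_div i v, hperm]
  rw [hi, hx _ (Nat.mod_lt _ hv.pos), hAB, hσ']
  simp only [← Nat.dvd_iff_mod_eq_zero, L]
  split_ifs <;> ring

/-- For `p = 2`, `q = 2^r`, a semiprimitive odd prime `v` (i.e. `−1` is a power of `2`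
mod `v`), `m = v`, `s = q−1`, trace coefficient `0` and fixed norm `b = g^{ind b}`:
the value of `P_v(0, q−1, ind b) − (q^{v−1}−1)/(v(q−1))`. -/
theorem stmt19 (r v : ℕ) (hr : 0 < r) (hv : v.Prime) (hvodd : Odd v)
    (hsemi : ∃ k : ℕ, (2 : ZMod v) ^ k = -1)
    (F : Type*) [Field F] [Fintype F]
    (hF : Fintype.card F = 2 ^ r)
    (g : Fˣ) (hg : ∀ u : Fˣ, u ∈ Subgroup.zpowers g)
    (b : Fˣ) (indb : ℕ) (hindb : indb ≤ Fintype.card F - 2 ∧ g ^ indb = b) :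
    (¬ orderOf (2 : ZMod v) ∣ r →
      (PP F (g : F) v (Fintype.card F - 1) indb 0 : ℝ) -
        ((Fintype.card F : ℝ) ^ (v - 1) - 1) / ((v : ℝ) * ((Fintype.card F : ℝ) - 1)) = 0) ∧
    (orderOf (2 : ZMod v) ∣ r → ¬ v ∣ indb →
      (PP F (g : F) v (Fintype.card F - 1) indb 0 : ℝ) -
        ((Fintype.card F : ℝ) ^ (v - 1) - 1) / ((v : ℝ) * ((Fintype.card F : ℝ) - 1)) =
        (-1 : ℝ) ^ (r / orderOf (2 : ZMod v)) *
          Real.sqrt ((Fintype.card F : ℝ) ^ (v - 2)) / (v : ℝ)) ∧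
    (orderOf (2 : ZMod v) ∣ r → v ∣ indb →
      (PP F (g : F) v (Fintype.card F - 1) indb 0 : ℝ) -
        ((Fintype.card F : ℝ) ^ (v - 1) - 1) / ((v : ℝ) * ((Fintype.card F : ℝ) - 1)) =
        -(-1 : ℝ) ^ (r / orderOf (2 : ZMod v)) * ((v : ℝ) - 1) *
          Real.sqrt ((Fintype.card F : ℝ) ^ (v - 2)) / (v : ℝ)) := by
  have : Fact v.Prime := ⟨hv⟩
  have : Fact (Nat.Prime 2) := ⟨Nat.prime_two⟩
  have hv3 : 3 ≤ v := by
    rcases hvodd with ⟨a, ha⟩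
    have := hv.two_le
    omega
  have hc2 : CharP F 2 := by
    have := FiniteField.cast_card_eq_zero F
    rw [hF] at this
    push_cast at this
    exact CharTwo.of_one_ne_zero_of_two_eq_zero one_ne_zero (pow_eq_zero_iff hr.ne' |>.1 this)
  letI : Algebra (ZMod 2) F := ZMod.algebra F 2
  have : NeZero v := ⟨hv.ne_zero⟩
  let E := FiniteField.Extension F 2 v
  letI : Fintype E := Fintype.ofFinite E
  have hd : Module.finrank F E = v := FiniteField.finrank_extension F 2 v
  have hvF : (v : F) ≠ 0 := by
    rw [Ne, CharP.cast_eq_zero_iff F 2]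
    rcases hvodd with ⟨a, ha⟩
    omega
  have hPP := PP_NN F E v hv hvF hd g
  have hv0 : (v : ℝ) ≠ 0 := by exact_mod_cast hv.ne_zero
  have hq1 : (Fintype.card F : ℝ) - 1 ≠ 0 := by
    have : (1 : ℝ) < Fintype.card F := by exact_mod_cast Fintype.one_lt_card
    linarith
  have hPR : (v : ℝ) * (PP F (g : F) v (Fintype.card F - 1) indb 0 : ℝ) = NN F E ((g : F) ^ indb) := by
    rw [hPP]; push_cast; ring
  have hord : orderOf (2 : ZMod v) ∣ r ↔ v ∣ Fintype.card F - 1 := by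
    rw [orderOf_dvd_iff_pow_eq_one, ← ZMod.natCast_eq_zero_iff, Nat.cast_sub Fintype.card_pos, hF]
    push_cast
    rw [sub_eq_zero]
  have key : orderOf (2 : ZMod v) ∣ r →
      (NN F E ((g : F) ^ indb) : ℝ) = ((Fintype.card F : ℝ) ^ (v - 1) - 1) / ((Fintype.card F : ℝ) - 1)
      + (-1) ^ (r / orderOf (2 : ZMod v)) * Real.sqrt ((Fintype.card F : ℝ) ^ (v - 2))
      - (if v ∣ indb then v * ((-1) ^ (r / orderOf (2 : ZMod v)) *
        Real.sqrt ((Fintype.card F : ℝ) ^ (v - 2))) else 0) := by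
    intro hdr
    obtain ⟨k, hk⟩ := hsemi
    have hne : (-1 : ZMod v) ≠ 1 := by
      intro h
      have h2 : ((2 : ℕ) : ZMod v) = 0 := by push_cast; linear_combination -h
      rw [ZMod.natCast_eq_zero_iff] at h2
      have := Nat.le_of_dvd (by norm_num) h2
      omega
    have hdpos : 0 < orderOf (2 : ZMod v) := Nat.pos_of_dvd_of_pos hdr hr
    obtain ⟨t, ht⟩ : 2 ∣ orderOf (2 : ZMod v) := by
      by_contra hcon
      have hcop : Nat.Coprime (orderOf (2 : ZMod v)) 2 :=
        ((Nat.Prime.coprime_iff_not_dvd Nat.prime_two).2 hcon).symm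
      have h1 : orderOf (2 : ZMod v) ∣ k * 2 := by
        apply orderOf_dvd_of_pow_eq_one; rw [pow_mul, hk]; ring
      have h2 := hcop.dvd_of_dvd_mul_right h1
      rw [orderOf_dvd_iff_pow_eq_one, hk] at h2
      exact hne h2
    have ht1 : (2 : ZMod v) ^ t = -1 := by
      have h1 : ((2 : ZMod v) ^ t) ^ 2 = 1 := by
        rw [← pow_mul, mul_comm, ← ht]; exact pow_orderOf_eq_one _
      rcases eq_or_eq_neg_of_sq_eq_sq _ 1 (h1.trans (one_pow 2).symm) with h | h
      · exfalso
        have := Nat.le_of_dvd (by omega) (orderOf_dvd_of_pow_eq_one h)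
        omega
      · exact h
    obtain ⟨γ, hγ⟩ := hdr
    have hdiv : r / orderOf (2 : ZMod v) = γ := by
      rw [hγ, Nat.mul_div_cancel_left _ hdpos]
    have hF' : Fintype.card F = 2 ^ (2 * t * γ) := by rw [hF, hγ, ← ht]
    letI : Algebra (ZMod 2) E := inferInstanceAs (Algebra (ZMod 2) (FiniteField.Extension F 2 v))
    haveI : IsScalarTower (ZMod 2) F E :=
      inferInstanceAs (IsScalarTower (ZMod 2) F (FiniteField.Extension F 2 v))
    have h := NN_semi F E v hv hvodd hd t γ ht1 hF' g hg
      (fun i => ⟨_, hPP i⟩) indb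
    have hs : Real.sqrt ((Fintype.card F : ℝ) ^ (v - 2)) = 2 ^ (t * γ * (v - 2)) := by
      rw [Real.sqrt_eq_iff_mul_self_eq (by positivity) (by positivity), hF']
      push_cast
      rw [← pow_mul, ← pow_add]; congr 1; ring
    rw [hdiv, hs, ← geom_sum_mul, mul_div_cancel_right₀ _ hq1]
    have h' := congrArg (Int.cast : ℤ → ℝ) h
    push_cast at h'
    exact h'
  have hbase : ((Fintype.card F : ℝ) ^ (v - 1) - 1) / ((v : ℝ) * ((Fintype.card F : ℝ) - 1)) =
      ((Fintype.card F : ℝ) ^ (v - 1) - 1) / ((Fintype.card F : ℝ) - 1) / v := by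
    rw [div_div, mul_comm]
  have hPd : (PP F (g : F) v (Fintype.card F - 1) indb 0 : ℝ) = NN F E ((g : F) ^ indb) / v := by
    rw [← hPR]; field_simp
  rw [hbase, hPd]
  refine ⟨?_, ?_, ?_⟩
  · intro h
    have h1 := NN_coprime F E v hv hd (by rwa [← hord]) (g ^ indb)
    rw [Units.val_pow_eq_pow_val] at h1
    have h2 : (NN F E ((g : F) ^ indb) : ℝ) * ((Fintype.card F : ℝ) - 1) =
      (Fintype.card F : ℝ) ^ (v - 1) - 1 := by exact_mod_cast h1
    rw [← h2, mul_div_cancel_right₀ _ hq1, sub_self]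
  · intro h hi
    rw [key h, if_neg hi]; ring
  · intro h hi
    rw [key h, if_pos hi]; field_simp; ring

end
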